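/- Local error of the first Lie splitting step (Lemma 4.3, linear case): Assume the weak CFL condition 7 c_inv c_M τ < 3 h and consistent initial data with ∂_τ p⁰ = ṗ(0). Then ‖u¹ − u⁰‖_A² + ‖p¹ − p⁰‖_{A_Γ}² + τ (1 − c_M h − 2 c_{α,M} τ h − 2 c_A τ h⁻¹) ‖∂_τ p¹ − ṗ(0)‖_{M_Γ}² ≤ τ² ‖u̇(0)‖_A² + τ² ‖ṗ(0)‖_{A_Γ}² + 2 τ² ‖ṗ(0)‖_{A₂₂}² + τ ‖f_Ω¹ − f_Ω⁰‖_{M⁻¹}² + τ ‖f_Γ¹ − f_Γ⁰‖_{M_Γ⁻¹}². -/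

import Mathlib

open Matrix Finset

/-- The squared "energy" norm `‖x‖_S² = xᵀ S x` induced by a matrix `S`. -/
noncomputable def vecNormSq {ι : Type*} [Fintype ι] (S : Matrix ι ι ℝ) (x : ι → ℝ) : ℝ :=
  x ⬝ᵥ S.mulVec x

/-!
Subtracting the consistency condition at `t = 0` from the first splitting step gives an equation
for the velocity error `(e, z) = (∂_τ u¹, ∂_τ p¹) - (u̇₁(0), ṗ(0))` in which, because `p` is lagged
in the bulk terms, `M` acts on `(e, z) - (0, z)` and `A` on `(∂_τ u¹, ∂_τ p¹) - (0, z + ṗ(0))`.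
Test it with `(e, z)`. The identity
`2 ⟨x - y, S (x - r)⟩ = ‖x‖_S² - ‖y‖_S² - ‖r‖_S² + ‖x - y - r‖_S²` shows that a lag `r` costs no
more than `‖r‖_S²`. The resulting terms `‖z‖_{M₂₂}²` and `‖z‖_{A₂₂}²` are absorbed into
`‖z‖_{M_Γ}²` by the mass and inverse estimates.
-/

theorem isSymm_of_posSemidef {ι : Type*} {S : Matrix ι ι ℝ} (hS : S.PosSemidef) : S.IsSymm :=
  (conjTranspose_eq_transpose_of_trivial S).symm.trans hS.isHermitian

section QuadraticForm

variable {ι : Type*} [Fintype ι] {S : Matrix ι ι ℝ}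

theorem dotProduct_mulVec_comm_of_isSymm {R : Type*} [CommSemiring R] {T : Matrix ι ι R}
    (hT : T.IsSymm) (x y : ι → R) : x ⬝ᵥ T *ᵥ y = y ⬝ᵥ T *ᵥ x := by
  rw [← dotProduct_transpose_mulVec, hT.eq]

theorem vecNormSq_nonneg (hS : S.PosSemidef) (x : ι → ℝ) : 0 ≤ vecNormSq S x :=
  hS.dotProduct_mulVec_nonneg x

theorem vecNormSq_smul (S : Matrix ι ι ℝ) (c : ℝ) (x : ι → ℝ) :
    vecNormSq S (c • x) = c ^ 2 * vecNormSq S x := by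
  simp only [vecNormSq, mulVec_smul, dotProduct_smul, smul_dotProduct, smul_eq_mul]
  ring

theorem vecNormSq_zero (S : Matrix ι ι ℝ) : vecNormSq S 0 = 0 :=
  zero_dotProduct _

theorem vecNormSq_sub (hS : S.IsSymm) (x y : ι → ℝ) :
    vecNormSq S (x - y) = vecNormSq S x - 2 * (x ⬝ᵥ S *ᵥ y) + vecNormSq S y := by
  simp only [vecNormSq, mulVec_sub, dotProduct_sub, sub_dotProduct,
    dotProduct_mulVec_comm_of_isSymm hS y x]
  ring

theorem vecNormSq_add_le (hS : S.PosSemidef) (x y : ι → ℝ) :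
    vecNormSq S (x + y) ≤ 2 * vecNormSq S x + 2 * vecNormSq S y := by
  have hparallelogram :
      vecNormSq S (x + y) + vecNormSq S (x - y) = 2 * vecNormSq S x + 2 * vecNormSq S y := by
    simp only [vecNormSq, mulVec_add, mulVec_sub, dotProduct_add, dotProduct_sub, add_dotProduct,
      sub_dotProduct]
    ring
  linarith [vecNormSq_nonneg hS (x - y)]

theorem two_mul_sub_dotProduct_mulVec_sub (hS : S.IsSymm) (x y r : ι → ℝ) :
    2 * ((x - y) ⬝ᵥ S *ᵥ (x - r)) =
      vecNormSq S x - vecNormSq S y - vecNormSq S r + vecNormSq S (x - y - r) := by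
  rw [vecNormSq_sub hS (x - y) r, vecNormSq_sub hS x y, mulVec_sub, dotProduct_sub,
    sub_dotProduct x y (S *ᵥ x), dotProduct_mulVec_comm_of_isSymm hS y x]
  simp only [vecNormSq]
  ring

theorem vecNormSq_sub_vecNormSq_sub_vecNormSq_le (hS : S.PosSemidef) (x y r : ι → ℝ) :
    vecNormSq S x - vecNormSq S y - vecNormSq S r ≤ 2 * ((x - y) ⬝ᵥ S *ᵥ (x - r)) := by
  rw [two_mul_sub_dotProduct_mulVec_sub (isSymm_of_posSemidef hS)]
  linarith [vecNormSq_nonneg hS (x - y - r)]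

theorem two_mul_dotProduct_le_vecNormSq_add_inv [DecidableEq ι] (hS : S.PosDef) (x g : ι → ℝ) :
    2 * (x ⬝ᵥ g) ≤ vecNormSq S x + vecNormSq S⁻¹ g := by
  have hg : S *ᵥ S⁻¹ *ᵥ g = g := by
    rw [mulVec_mulVec, mul_nonsing_inv _ ((isUnit_iff_isUnit_det S).1 hS.isUnit), one_mulVec]
  have hdual : vecNormSq S (S⁻¹ *ᵥ g) = vecNormSq S⁻¹ g := by
    rw [vecNormSq, hg, dotProduct_comm, vecNormSq]
  have hsq := vecNormSq_nonneg hS.posSemidef (x - S⁻¹ *ᵥ g)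
  rw [vecNormSq_sub (isSymm_of_posSemidef hS.posSemidef), hg, hdual] at hsq
  linarith

end QuadraticForm

section BoundaryExtension

variable {m n R : Type*}

/-- The boundary values `y`, indexed by `n`, extended by zero to the interior indices `m`: a vector
`(0, y)` of bulk degrees of freedom. -/
def boundaryExtension (m : Type*) [Zero R] (y : n → R) : m ⊕ n → R :=
  Sum.elim 0 y

theorem boundaryExtension_add [AddZeroClass R] (y z : n → R) :
    boundaryExtension m (y + z) = boundaryExtension m y + boundaryExtension m z := by
  simp only [boundaryExtension, ← Sum.elim_add_add, add_zero]

theorem sumElim_sub_boundaryExtension [AddGroup R] (x : m → R) (y z : n → R) :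
    Sum.elim x y - boundaryExtension m z = Sum.elim x (y - z) := by
  rw [boundaryExtension, ← Sum.elim_sub_sub, sub_zero]

variable [Fintype m] [Fintype n]

theorem sumElim_dotProduct_boundaryExtension [NonUnitalNonAssocSemiring R]
    (x : m → R) (y z : n → R) : Sum.elim x y ⬝ᵥ boundaryExtension m z = y ⬝ᵥ z := by
  rw [boundaryExtension, sumElim_dotProduct_sumElim, dotProduct_zero, zero_add]

theorem vecNormSq_boundaryExtension (S : Matrix (m ⊕ n) (m ⊕ n) ℝ) (y : n → ℝ) :
    vecNormSq S (boundaryExtension m y) = vecNormSq S.toBlocks₂₂ y := by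
  rw [vecNormSq, boundaryExtension, ← fromBlocks_toBlocks S, fromBlocks_mulVec,
    sumElim_dotProduct_sumElim]
  simp only [zero_dotProduct, Sum.elim_comp_inl, Sum.elim_comp_inr, mulVec_zero, zero_add,
    toBlocks_fromBlocks₂₂, vecNormSq]

end BoundaryExtension

theorem stiffness_le_boundary_mass {n : Type*} [Fintype n] {A₂₂ M₂₂ MΓ : Matrix n n ℝ}
    {h cM cinv αΩ : ℝ} (hh : 0 < h) (hcinv : 0 ≤ cinv) (hαΩ : 0 ≤ αΩ) {z : n → ℝ}
    (hmass : vecNormSq M₂₂ z ≤ cM * h * vecNormSq MΓ z)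
    (hinv : vecNormSq A₂₂ z ≤ (αΩ + cinv / h ^ 2) * vecNormSq M₂₂ z) :
    vecNormSq A₂₂ z ≤ (cM * αΩ * h + cM * cinv / h) * vecNormSq MΓ z :=
  calc
    vecNormSq A₂₂ z ≤ (αΩ + cinv / h ^ 2) * (cM * h * vecNormSq MΓ z) :=
      hinv.trans (mul_le_mul_of_nonneg_left hmass (by positivity))
    _ = (cM * αΩ * h + cM * cinv / h) * vecNormSq MΓ z := by
      field_simp [hh.ne']

section LieSplitting

variable {m n : Type*} [Fintype m] [Fintype n]

theorem lie_splitting_error_equation {R : Type*} [CommRing R]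
    {M₁₁ A₁₁ : Matrix m m R} {M₁₂ A₁₂ : Matrix m n R} {M₂₁ A₂₁ : Matrix n m R}
    {M₂₂ A₂₂ MΓ AΓ : Matrix n n R} {τ : R}
    {u f₁ f₁' v v₀ : m → R} {p f₂ f₂' fΓ fΓ' q q₀ : n → R}
    (hscheme₁ : M₁₁ *ᵥ v + A₁₁ *ᵥ (u + τ • v) = f₁' - M₁₂ *ᵥ q₀ - A₁₂ *ᵥ p)
    (hscheme₂ : MΓ *ᵥ q + AΓ *ᵥ (p + τ • q) =
      fΓ' + f₂' - M₂₂ *ᵥ q₀ - A₂₂ *ᵥ p - M₂₁ *ᵥ v - A₂₁ *ᵥ (u + τ • v))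
    (hcons₁ : M₁₁ *ᵥ v₀ + M₁₂ *ᵥ q₀ + A₁₁ *ᵥ u + A₁₂ *ᵥ p = f₁)
    (hcons₂ : M₂₁ *ᵥ v₀ + (M₂₂ + MΓ) *ᵥ q₀ + A₂₁ *ᵥ u + (A₂₂ + AΓ) *ᵥ p = f₂ + fΓ) :
    fromBlocks M₁₁ M₁₂ M₂₁ M₂₂ *ᵥ (Sum.elim (v - v₀) (q - q₀) - boundaryExtension m (q - q₀))
        + τ • fromBlocks A₁₁ A₁₂ A₂₁ A₂₂ *ᵥ
          (Sum.elim v q - boundaryExtension m ((q - q₀) + q₀))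
        + boundaryExtension m (MΓ *ᵥ (q - q₀) + τ • AΓ *ᵥ q) =
      Sum.elim f₁' f₂' - Sum.elim f₁ f₂ + boundaryExtension m (fΓ' - fΓ) := by
  rw [sumElim_sub_boundaryExtension, sumElim_sub_boundaryExtension, sub_add_cancel, sub_self,
    sub_self]
  simp only [mulVec_add, mulVec_smul, add_mulVec] at hscheme₁ hscheme₂ hcons₂
  ext (i | i)
  · have hstep := congrFun hscheme₁ i
    have hconsistent := congrFun hcons₁ i
    simp only [boundaryExtension, fromBlocks_mulVec, Sum.elim_comp_inl, Sum.elim_comp_inr,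
      mulVec_sub, mulVec_zero, Pi.add_apply, Pi.sub_apply, Pi.smul_apply, Pi.zero_apply,
      smul_eq_mul, Sum.elim_inl] at hstep hconsistent ⊢
    linear_combination hstep - hconsistent
  · have hstep := congrFun hscheme₂ i
    have hconsistent := congrFun hcons₂ i
    simp only [boundaryExtension, fromBlocks_mulVec, Sum.elim_comp_inl, Sum.elim_comp_inr,
      mulVec_sub, mulVec_zero, Pi.add_apply, Pi.sub_apply, Pi.smul_apply, Pi.zero_apply,
      smul_eq_mul, Sum.elim_inr] at hstep hconsistent ⊢
    linear_combination hstep - hconsistent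

theorem lie_splitting_energy_estimate [DecidableEq m] [DecidableEq n]
    {M A : Matrix (m ⊕ n) (m ⊕ n) ℝ} {MΓ AΓ : Matrix n n ℝ}
    (hM : M.PosDef) (hA : A.PosSemidef) (hMΓ : MΓ.PosDef) (hAΓ : AΓ.PosSemidef)
    {τ : ℝ} (hτ : 0 ≤ τ) {v v₀ : m → ℝ} {q q₀ gΓ : n → ℝ} {g : m ⊕ n → ℝ}
    (herr : M *ᵥ (Sum.elim (v - v₀) (q - q₀) - boundaryExtension m (q - q₀))
        + τ • A *ᵥ (Sum.elim v q - boundaryExtension m ((q - q₀) + q₀))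
        + boundaryExtension m (MΓ *ᵥ (q - q₀) + τ • AΓ *ᵥ q) = g + boundaryExtension m gΓ) :
    τ * (vecNormSq A (Sum.elim v q) - vecNormSq A (Sum.elim v₀ q₀)
          - 2 * vecNormSq A.toBlocks₂₂ (q - q₀) - 2 * vecNormSq A.toBlocks₂₂ q₀)
        + τ * (vecNormSq AΓ q - vecNormSq AΓ q₀)
        + (vecNormSq MΓ (q - q₀) - vecNormSq M.toBlocks₂₂ (q - q₀)) ≤
      vecNormSq M⁻¹ g + vecNormSq MΓ⁻¹ gΓ := by
  simp only [← vecNormSq_boundaryExtension]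
  rw [boundaryExtension_add] at herr
  set z := q - q₀
  set E := Sum.elim (v - v₀) z with hE
  set Z := boundaryExtension m z
  set W := boundaryExtension m q₀
  have htest : E ⬝ᵥ M *ᵥ (E - Z) + τ * (E ⬝ᵥ A *ᵥ (Sum.elim v q - (Z + W)))
      + (vecNormSq MΓ z + τ * (z ⬝ᵥ AΓ *ᵥ q)) = E ⬝ᵥ g + z ⬝ᵥ gΓ := by
    simpa only [dotProduct_add, dotProduct_smul, smul_eq_mul, hE, vecNormSq,
      sumElim_dotProduct_boundaryExtension] using congrArg (E ⬝ᵥ ·) herr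
  have hmass : vecNormSq M E - vecNormSq M Z ≤ 2 * (E ⬝ᵥ M *ᵥ (E - Z)) := by
    simpa only [vecNormSq_zero, sub_zero] using
      vecNormSq_sub_vecNormSq_sub_vecNormSq_le hM.posSemidef E 0 Z
  have hstiff : vecNormSq A (Sum.elim v q) - vecNormSq A (Sum.elim v₀ q₀) - vecNormSq A (Z + W) ≤
      2 * (E ⬝ᵥ A *ᵥ (Sum.elim v q - (Z + W))) := by
    rw [show E = Sum.elim v q - Sum.elim v₀ q₀ from Sum.elim_sub_sub ..]
    exact vecNormSq_sub_vecNormSq_sub_vecNormSq_le hA _ _ _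
  have hlag : vecNormSq A (Z + W) ≤ 2 * vecNormSq A Z + 2 * vecNormSq A W :=
    vecNormSq_add_le hA Z W
  have hsurf : vecNormSq AΓ q - vecNormSq AΓ q₀ ≤ 2 * (z ⬝ᵥ AΓ *ᵥ q) := by
    simpa only [vecNormSq_zero, sub_zero] using
      vecNormSq_sub_vecNormSq_sub_vecNormSq_le hAΓ q q₀ 0
  have hdata := two_mul_dotProduct_le_vecNormSq_add_inv hM E g
  have hdataΓ := two_mul_dotProduct_le_vecNormSq_add_inv hMΓ z gΓ
  linear_combination 2 * htest + hmass + τ * (hstiff + hlag) + τ * hsurf + hdata + hdataΓ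

theorem lie_splitting_local_error_general [DecidableEq m] [DecidableEq n]
    {M₁₁ A₁₁ : Matrix m m ℝ} {M₁₂ A₁₂ : Matrix m n ℝ} {M₂₁ A₂₁ : Matrix n m ℝ}
    {M₂₂ A₂₂ MΓ AΓ : Matrix n n ℝ}
    (hM : (fromBlocks M₁₁ M₁₂ M₂₁ M₂₂).PosDef) (hA : (fromBlocks A₁₁ A₁₂ A₂₁ A₂₂).PosSemidef)
    (hMΓ : MΓ.PosDef) (hAΓ : AΓ.PosSemidef)
    {τ h cM cinv αΩ : ℝ} (hτ : 0 < τ) (hh : 0 < h) (hcinv : 0 ≤ cinv) (hαΩ : 0 ≤ αΩ)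
    (hmass : ∀ z, vecNormSq M₂₂ z ≤ cM * h * vecNormSq MΓ z)
    (hinv : ∀ z, vecNormSq A₂₂ z ≤ (αΩ + cinv / h ^ 2) * vecNormSq M₂₂ z)
    {u u' f₁ f₁' v v₀ : m → ℝ} {p p' f₂ f₂' fΓ fΓ' q q₀ : n → ℝ}
    (hv : v = τ⁻¹ • (u' - u)) (hq : q = τ⁻¹ • (p' - p))
    (hscheme₁ : M₁₁ *ᵥ v + A₁₁ *ᵥ u' = f₁' - M₁₂ *ᵥ q₀ - A₁₂ *ᵥ p)
    (hscheme₂ : MΓ *ᵥ q + AΓ *ᵥ p' =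
      fΓ' + f₂' - M₂₂ *ᵥ q₀ - A₂₂ *ᵥ p - M₂₁ *ᵥ v - A₂₁ *ᵥ u')
    (hcons₁ : M₁₁ *ᵥ v₀ + M₁₂ *ᵥ q₀ + A₁₁ *ᵥ u + A₁₂ *ᵥ p = f₁)
    (hcons₂ : M₂₁ *ᵥ v₀ + (M₂₂ + MΓ) *ᵥ q₀ + A₂₁ *ᵥ u + (A₂₂ + AΓ) *ᵥ p = f₂ + fΓ) :
    vecNormSq (fromBlocks A₁₁ A₁₂ A₂₁ A₂₂) (Sum.elim u' p' - Sum.elim u p)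
      + vecNormSq AΓ (p' - p)
      + τ * (1 - cM * h - 2 * (cM * αΩ) * τ * h - 2 * (cM * cinv) * τ / h)
          * vecNormSq MΓ (q - q₀) ≤
      τ ^ 2 * vecNormSq (fromBlocks A₁₁ A₁₂ A₂₁ A₂₂) (Sum.elim v₀ q₀)
      + τ ^ 2 * vecNormSq AΓ q₀
      + 2 * τ ^ 2 * vecNormSq A₂₂ q₀
      + τ * vecNormSq (fromBlocks M₁₁ M₁₂ M₂₁ M₂₂)⁻¹ (Sum.elim f₁' f₂' - Sum.elim f₁ f₂)
      + τ * vecNormSq MΓ⁻¹ (fΓ' - fΓ) := by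
  have hu : u' - u = τ • v := by rw [hv, smul_inv_smul₀ hτ.ne']
  have hp : p' - p = τ • q := by rw [hq, smul_inv_smul₀ hτ.ne']
  have hup : Sum.elim u' p' - Sum.elim u p = τ • Sum.elim v q := by
    rw [← Sum.elim_sub_sub, hu, hp]
    exact (Sum.comp_elim (τ • ·) v q).symm
  rw [eq_add_of_sub_eq' hu] at hscheme₁ hscheme₂
  rw [eq_add_of_sub_eq' hp] at hscheme₂
  have henergy := lie_splitting_energy_estimate hM hA hMΓ hAΓ hτ.le
    (lie_splitting_error_equation hscheme₁ hscheme₂ hcons₁ hcons₂)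
  have hstiff := stiffness_le_boundary_mass hh hcinv hαΩ (hmass (q - q₀)) (hinv (q - q₀))
  rw [toBlocks_fromBlocks₂₂, toBlocks_fromBlocks₂₂] at henergy
  rw [hup, hp, vecNormSq_smul, vecNormSq_smul]
  linear_combination τ * henergy + τ * hmass (q - q₀) + 2 * τ ^ 2 * hstiff

end LieSplitting

/-- **Local error of the first Lie splitting step (Lemma 4.3, linear case).**
Under the weak CFL condition and consistent initial data with `∂_τ p⁰ = ṗ(0)`,
the error of the first step is estimated. -/
theorem lie_splitting_local_error
    (N₁ N₂ : ℕ) (hN₁ : 0 < N₁) (hN₂ : 0 < N₂)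
    (M₁₁ A₁₁ : Matrix (Fin N₁) (Fin N₁) ℝ)
    (M₁₂ A₁₂ : Matrix (Fin N₁) (Fin N₂) ℝ)
    (M₂₁ A₂₁ : Matrix (Fin N₂) (Fin N₁) ℝ)
    (M₂₂ A₂₂ MΓ AΓ : Matrix (Fin N₂) (Fin N₂) ℝ)
    (hM : (Matrix.fromBlocks M₁₁ M₁₂ M₂₁ M₂₂).PosDef)
    (hA : (Matrix.fromBlocks A₁₁ A₁₂ A₂₁ A₂₂).PosSemidef)
    (hM21 : M₂₁ = M₁₂ᵀ) (hA21 : A₂₁ = A₁₂ᵀ)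
    (hMΓ : MΓ.PosDef) (hAΓ : AΓ.PosSemidef)
    -- constants
    (τ h cM cinv αΩ : ℝ)
    (hτ : 0 < τ) (hh : 0 < h) (hcM : 0 < cM) (hcinv : 0 < cinv) (hαΩ : 0 ≤ αΩ)
    -- boundary mass estimate
    (hmass : ∀ z : Fin N₂ → ℝ, vecNormSq M₂₂ z ≤ cM * h * vecNormSq MΓ z)
    -- inverse estimate
    (hinv : ∀ z : Fin N₂ → ℝ, vecNormSq A₂₂ z ≤ (αΩ + cinv / h ^ 2) * vecNormSq M₂₂ z)
    -- weak CFL condition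
    (hCFL : 7 * cinv * cM * τ < 3 * h)
    -- the discrete sequences and data
    (u₁ f₁ : ℕ → Fin N₁ → ℝ) (p dtp f₂ fΓ : ℕ → Fin N₂ → ℝ)
    (hdtp : ∀ n : ℕ, dtp (n + 1) = τ⁻¹ • (p (n + 1) - p n))
    (hscheme₁ : ∀ n : ℕ,
      M₁₁.mulVec (τ⁻¹ • (u₁ (n + 1) - u₁ n)) + A₁₁.mulVec (u₁ (n + 1)) =
        f₁ (n + 1) - M₁₂.mulVec (dtp n) - A₁₂.mulVec (p n))
    (hscheme₂ : ∀ n : ℕ,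
      MΓ.mulVec (dtp (n + 1)) + AΓ.mulVec (p (n + 1)) =
        fΓ (n + 1) + f₂ (n + 1) - M₂₂.mulVec (dtp n) - A₂₂.mulVec (p n)
          - M₂₁.mulVec (τ⁻¹ • (u₁ (n + 1) - u₁ n)) - A₂₁.mulVec (u₁ (n + 1)))
    -- consistent initial data: u̇₁(0) and ṗ(0)
    (du₁0 : Fin N₁ → ℝ) (dp0 : Fin N₂ → ℝ)
    (hcons₁ : M₁₁.mulVec du₁0 + M₁₂.mulVec dp0 + A₁₁.mulVec (u₁ 0) + A₁₂.mulVec (p 0) = f₁ 0)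
    (hcons₂ : M₂₁.mulVec du₁0 + (M₂₂ + MΓ).mulVec dp0 + A₂₁.mulVec (u₁ 0)
        + (A₂₂ + AΓ).mulVec (p 0) = f₂ 0 + fΓ 0)
    -- ∂_τ p⁰ = ṗ(0)
    (hinit : dtp 0 = dp0) :
    vecNormSq (Matrix.fromBlocks A₁₁ A₁₂ A₂₁ A₂₂)
        (Sum.elim (u₁ 1) (p 1) - Sum.elim (u₁ 0) (p 0))
      + vecNormSq AΓ (p 1 - p 0)
      + τ * (1 - cM * h - 2 * (cM * αΩ) * τ * h - 2 * (cM * cinv) * τ / h)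
          * vecNormSq MΓ (dtp 1 - dp0)
    ≤ τ ^ 2 * vecNormSq (Matrix.fromBlocks A₁₁ A₁₂ A₂₁ A₂₂) (Sum.elim du₁0 dp0)
      + τ ^ 2 * vecNormSq AΓ dp0
      + 2 * τ ^ 2 * vecNormSq A₂₂ dp0
      + τ * vecNormSq (Matrix.fromBlocks M₁₁ M₁₂ M₂₁ M₂₂)⁻¹
          (Sum.elim (f₁ 1) (f₂ 1) - Sum.elim (f₁ 0) (f₂ 0))
      + τ * vecNormSq MΓ⁻¹ (fΓ 1 - fΓ 0) := by
  subst hinit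
  exact lie_splitting_local_error_general hM hA hMΓ hAΓ hτ hh hcinv.le hαΩ hmass hinv rfl (hdtp 0)
    (hscheme₁ 0) (hscheme₂ 0) hcons₁ hcons₂
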